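/- Let λ > 0, let dη_λ = |x|^λ dx on ℝ, and let p ≥ 2(λ + 1). There exist a constant C(p, λ) > 0 and a sequence of nonnegative functions h_k ∈ L^p(dη_λ) with ‖h_k‖_{L²(ℝ)} = 1 such that δ_BH(h_k) → 0, ‖h_k‖_{L^p(dη_λ)} → ∞, and liminf_{k→∞} dist_{L^p(dη_λ)}(h_k, 𝔊) / ‖h_k‖_{L^p(dη_λ)} ≥ C(p, λ) > 0. -/

import Mathlib

/-!
Write `g = G_{π,0}`. The competitors are `h = c (g + ε (g(· - R) + g(· + R)))`, with `c` the `L²`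
normalization, `ε → 0`, and `R → ∞` so fast that `ε^p R^λ → ∞`.

*The deficit tends to zero, uniformly in `R`.* The function `t ↦ t² log t²` is Lipschitz on bounded
intervals, so on bounded functions the entropy of the square is Lipschitz in `L¹`
(`abs_entropy_sub_le`). Clearly `‖h - g‖_{L¹} = O(ε)`; moreover `ĝ = g` and translations become
phases, so `||ĥ| - g| = O(ε) g` pointwise. Both entropies are therefore `O(ε)`-close to
`S(g²) = (1 - log 2)/2` (`abs_deficit_bump_le`).

*The norm blows up.* The weight is of size `R^λ` on the side bumps, so `‖h‖^p` is comparable to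
`ε^p R^λ` (`bump_weighted_upper`, `bump_weighted_lower`).

*No Gaussian is close* (`dist_lower`). If `G_{a,r}` is at most half of `h` on a unit interval inside
one of the two side bumps, then `‖h - G_{a,r}‖^p` is at least of order `ε^p R^λ`. Otherwise, being
unimodal, `G_{a,r}` is of size at least `ε` up to a constant on all of `[-R, R]`, so that
`‖G_{a,r}‖^p` is at least of order `ε^p R^{λ+1}`, much larger than `‖h‖^p`.
-/

open MeasureTheory Filter Real Topology FourierTransform

noncomputable section

/-- Shannon entropy `S(u) = −∫ u log u dx`. -/
def shannonEntropy (u : ℝ → ℝ) : ℝ := -∫ x, u x * Real.log (u x)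

/-- Deficit of the Beckner–Hirschman inequality,
`δ_BH(h) = S(h²) + S(|ĥ|²) − (1 − log 2)`. -/
def BHdeficit (h : ℝ → ℝ) : ℝ :=
  shannonEntropy (fun x => h x ^ 2)
    + shannonEntropy (fun ξ => ‖𝓕 (fun y => (h y : ℂ)) ξ‖ ^ 2)
    - (1 - Real.log 2)

/-- The Gaussian optimizers `G_{a,r}(x) = (2a/π)^{1/4} e^{−a(x−r)²}` of the BHI. -/
def Gfun (a r : ℝ) (x : ℝ) : ℝ := (2 * a / π) ^ ((1 : ℝ) / 4) * Real.exp (-a * (x - r) ^ 2)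

/-- The `L^p(dμ)` norm of a real function on `ℝ`. -/
def LpNormR (p : ℝ) (μ : Measure ℝ) (u : ℝ → ℝ) : ℝ := (∫ x, |u x| ^ p ∂μ) ^ (1 / p)

/-- The `L^p(dμ)` distance from `h` to the set `𝔊 = {G_{a,r} : a > 0, r ∈ ℝ}` of
optimizers of the BHI. -/
def distToG (p : ℝ) (μ : Measure ℝ) (h : ℝ → ℝ) : ℝ :=
  sInf {d : ℝ | ∃ a r : ℝ, 0 < a ∧ d = LpNormR p μ (fun x => h x - Gfun a r x)}

/-- The weighted measure `dη_λ = |x|^λ dx` on `ℝ`. -/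
def etaMeasure (l : ℝ) : Measure ℝ :=
  volume.withDensity (fun x => ENNReal.ofReal (|x| ^ l))

/-- The weighted measure `dm_θ = g^{−θ} dx` on `ℝ`, where `g = G_{π,0}`. -/
def mTheta (θ : ℝ) : Measure ℝ :=
  volume.withDensity (fun x => ENNReal.ofReal ((Gfun π 0 x) ^ (-θ)))


/-! ### Continuity of the entropy -/

lemma abs_mul_log_le {B t : ℝ} (ht : 0 ≤ t) (htB : t ≤ B) : |t * Real.log t| ≤ 1 + B ^ 2 := by
  rcases ht.eq_or_lt with h0 | h0
  · rw [← h0]; simp; positivity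
  rcases le_total t 1 with h1 | h1
  · have := Real.abs_log_mul_self_lt t h0 h1
    rw [mul_comm]; nlinarith
  · have h2 := Real.log_nonneg h1
    have h3 := Real.log_le_sub_one_of_pos h0
    rw [abs_of_nonneg (by positivity)]
    nlinarith

/-- The Lipschitz constant of `t ↦ t² log t²` on `[0, B]` used below. -/
def lipConst (B : ℝ) : ℝ := 4 * (1 + B ^ 2) + 2 * B

/-- In contrast to `t ↦ t log t`, the function `t ↦ t² log t²` is Lipschitz up to `0`, because its
derivative `4 t log t + 2 t` is bounded there. -/
lemma sq_mul_log_sq_lipschitz {B s t : ℝ} (hs : 0 ≤ s) (hsB : s ≤ B) (ht : 0 ≤ t) (htB : t ≤ B) :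
    |s ^ 2 * Real.log (s ^ 2) - t ^ 2 * Real.log (t ^ 2)| ≤ lipConst B * |s - t| := by
  have key : ∀ u : ℝ, 0 ≤ u → u ≤ B → |u ^ 2 * Real.log (u ^ 2)| ≤ lipConst B * |u| := by
    intro u hu huB
    have := abs_mul_log_le hu huB
    have e : u ^ 2 * Real.log (u ^ 2) = 2 * (u * Real.log u) * u := by
      rw [Real.log_pow]; push_cast; ring
    rw [e, abs_mul, abs_mul, abs_two]
    refine mul_le_mul_of_nonneg_right ?_ (abs_nonneg _)
    unfold lipConst
    nlinarith
  rcases hs.eq_or_lt with h0 | h0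
  · have := key t ht htB
    rw [← h0]; simpa using this
  rcases ht.eq_or_lt with h1 | h1
  · have := key s hs hsB
    rw [← h1]; simpa using this
  have := Convex.norm_image_sub_le_of_norm_hasDerivWithin_le
    (f := fun u : ℝ => u ^ 2 * Real.log (u ^ 2)) (f' := fun u => 4 * (u * Real.log u) + 2 * u)
    (s := Set.Ioc 0 B) (x := t) (y := s) (C := lipConst B) ?_ ?_ (convex_Ioc 0 B) ⟨h1, htB⟩ ⟨h0, hsB⟩
  · simpa [Real.norm_eq_abs] using this
  · intro u hu
    have hu0 : u ≠ 0 := hu.1.ne'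
    have h := (hasDerivAt_pow 2 u).mul ((hasDerivAt_pow 2 u).log (pow_ne_zero 2 hu0))
    refine (h.congr_deriv ?_).hasDerivWithinAt
    simp only [Real.log_pow]
    push_cast
    field_simp
    ring
  · intro u hu
    have := abs_mul_log_le hu.1.le hu.2
    rw [Real.norm_eq_abs]
    refine (abs_add_le _ _).trans ?_
    rw [abs_mul, abs_of_pos (show (0 : ℝ) < 4 by norm_num), abs_of_pos (by linarith [hu.1] : 0 < 2 * u)]
    unfold lipConst
    nlinarith [hu.2]

lemma integrable_sq_mul_log_sq {B : ℝ} {f : ℝ → ℝ} (hm : Measurable f) (h0 : ∀ x, 0 ≤ f x)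
    (hB : ∀ x, f x ≤ B) (hf : Integrable f) :
    Integrable (fun x => f x ^ 2 * Real.log (f x ^ 2)) := by
  refine (hf.const_mul (lipConst B)).mono' (by fun_prop) (Eventually.of_forall fun x => ?_)
  have := sq_mul_log_sq_lipschitz (h0 x) (hB x) le_rfl ((h0 x).trans (hB x))
  rw [Real.norm_eq_abs]
  simpa [abs_of_nonneg (h0 x)] using this

/-- On uniformly bounded functions, the entropy of the square is Lipschitz in `L¹`. -/
lemma abs_entropy_sub_le {B : ℝ} {f g : ℝ → ℝ} (hfm : Measurable f) (hgm : Measurable g)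
    (hf0 : ∀ x, 0 ≤ f x) (hg0 : ∀ x, 0 ≤ g x) (hfB : ∀ x, f x ≤ B) (hgB : ∀ x, g x ≤ B)
    (hf : Integrable f) (hg : Integrable g) :
    |shannonEntropy (fun x => f x ^ 2) - shannonEntropy (fun x => g x ^ 2)|
      ≤ lipConst B * ∫ x, |f x - g x| := by
  have h1 := integrable_sq_mul_log_sq hfm hf0 hfB hf
  have h2 := integrable_sq_mul_log_sq hgm hg0 hgB hg
  unfold shannonEntropy
  rw [neg_sub_neg, abs_sub_comm, ← integral_sub h1 h2, ← integral_const_mul]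
  refine (abs_integral_le_integral_abs).trans ?_
  refine integral_mono (h1.sub h2).abs ((hf.sub hg).abs.const_mul _) fun x => ?_
  exact sq_mul_log_sq_lipschitz (hf0 x) (hfB x) (hg0 x) (hgB x)

/-! ### The Gaussian optimizers -/

lemma Gfun_pi (r x : ℝ) : Gfun π r x = (2 : ℝ) ^ ((1 : ℝ) / 4) * Real.exp (-π * (x - r) ^ 2) := by
  unfold Gfun
  rw [mul_div_assoc, div_self Real.pi_ne_zero, mul_one]

lemma Gfun_nonneg {a : ℝ} (ha : 0 < a) (r x : ℝ) : 0 ≤ Gfun a r x := by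
  unfold Gfun; positivity

lemma Gfun_pi_le_two (r x : ℝ) : Gfun π r x ≤ 2 := by
  rw [Gfun_pi]
  have h1 : (2 : ℝ) ^ ((1 : ℝ) / 4) ≤ 2 := by
    conv_rhs => rw [← Real.rpow_one 2]
    exact Real.rpow_le_rpow_of_exponent_le (by norm_num) (by norm_num)
  have h2 : Real.exp (-π * (x - r) ^ 2) ≤ 1 := by
    rw [Real.exp_le_one_iff]; nlinarith [Real.pi_pos, sq_nonneg (x - r)]
  nlinarith [Real.exp_pos (-π * (x - r) ^ 2)]

lemma continuous_Gfun (a r : ℝ) : Continuous (Gfun a r) := by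
  unfold Gfun; fun_prop

lemma measurable_Gfun (a r : ℝ) : Measurable (Gfun a r) := (continuous_Gfun a r).measurable

lemma Gfun_shift (a r x : ℝ) : Gfun a r x = Gfun a 0 (x - r) := by
  unfold Gfun; simp

lemma integrable_Gfun {a : ℝ} (ha : 0 < a) (r : ℝ) : Integrable (Gfun a r) := by
  have h : Integrable (Gfun a 0) := by
    unfold Gfun
    simpa using (integrable_exp_neg_mul_sq ha).const_mul ((2 * a / π) ^ ((1 : ℝ) / 4))
  rw [show Gfun a r = fun x => Gfun a 0 (x - r) from funext (Gfun_shift a r)]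
  exact h.comp_sub_right r

/-- The `L¹` mass of `G_{π,r}`, which does not depend on `r`. -/
def gMass : ℝ := ∫ x, Gfun π 0 x

lemma integral_Gfun_pi (r : ℝ) : ∫ x, Gfun π r x = gMass := by
  simp_rw [Gfun_shift π r]
  exact integral_sub_right_eq_self (Gfun π 0) r

lemma gMass_nonneg : 0 ≤ gMass := integral_nonneg fun x => Gfun_nonneg Real.pi_pos 0 x

lemma two_rpow_quarter_sq : ((2 : ℝ) ^ ((1 : ℝ) / 4)) ^ 2 = √2 := by
  rw [← Real.rpow_natCast, ← Real.rpow_mul (by norm_num), Real.sqrt_eq_rpow]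
  norm_num

lemma Gfun_pi_zero_sq (x : ℝ) : Gfun π 0 x ^ 2 = √2 * Real.exp (-(2 * π) * x ^ 2) := by
  rw [Gfun_pi, mul_pow, two_rpow_quarter_sq, ← Real.exp_nat_mul]
  congr 2
  push_cast; ring

lemma integral_Gfun_pi_zero_sq : ∫ x, Gfun π 0 x ^ 2 = 1 := by
  simp_rw [Gfun_pi_zero_sq]
  rw [integral_const_mul, integral_gaussian, ← Real.sqrt_mul (by norm_num)]
  rw [Real.sqrt_eq_one]
  field_simp

lemma integral_sq_mul_gaussian : ∫ x : ℝ, x ^ 2 * Real.exp (-(2 * π) * x ^ 2) = 1 / (4 * π * √2) := by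
  have h := integral_comp_abs (f := fun x : ℝ => x ^ 2 * Real.exp (-(2 * π) * x ^ 2))
  simp only [sq_abs] at h
  rw [h]
  have h2 := integral_rpow_mul_exp_neg_mul_rpow (p := 2) (q := 2) (b := 2 * π) (by norm_num)
    (by norm_num) (by positivity)
  simp only [Real.rpow_two] at h2
  rw [h2, show ((2 : ℝ) + 1) / 2 = 1 / 2 + 1 by norm_num, Real.Gamma_add_one (by norm_num),
    Real.Gamma_one_half_eq, show (-(2 + 1) / 2 : ℝ) = -(1 + 1 / 2) by norm_num,
    Real.rpow_neg (by positivity), Real.rpow_add (by positivity), Real.rpow_one, ← Real.sqrt_eq_rpow,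
    Real.sqrt_mul (by norm_num)]
  have : √π ≠ 0 := by positivity
  field_simp
  norm_num

lemma entropy_Gfun_pi_zero : shannonEntropy (fun x => Gfun π 0 x ^ 2) = (1 - Real.log 2) / 2 := by
  unfold shannonEntropy
  have e : ∀ x : ℝ, Gfun π 0 x ^ 2 * Real.log (Gfun π 0 x ^ 2)
      = (Real.log 2 / 2) * Gfun π 0 x ^ 2 - (√2 * (2 * π)) * (x ^ 2 * Real.exp (-(2 * π) * x ^ 2)) := by
    intro x
    rw [Gfun_pi_zero_sq, Real.log_mul (by positivity) (Real.exp_pos _).ne', Real.log_exp,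
      Real.log_sqrt (by norm_num)]
    ring
  simp_rw [e]
  rw [integral_sub, integral_const_mul, integral_const_mul, integral_Gfun_pi_zero_sq,
    integral_sq_mul_gaussian]
  · have : √2 ≠ 0 := by positivity
    field_simp
    ring
  · refine Integrable.const_mul ?_ _
    simp_rw [Gfun_pi_zero_sq]
    exact (integrable_exp_neg_mul_sq (by positivity)).const_mul _
  · refine Integrable.const_mul ?_ _
    have := integrable_rpow_mul_exp_neg_mul_sq (b := 2 * π) (by positivity) (s := 2) (by norm_num)
    simpa only [Real.rpow_two] using this

/-! ### The competitors and their deficit -/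

/-- The unnormalized competitor: the Gaussian `G_{π,0}` with two copies of itself, scaled by `ε`,
centred at `R` and `-R`. -/
def rawFun (ε R x : ℝ) : ℝ := Gfun π 0 x + ε * (Gfun π R x + Gfun π (-R) x)

/-- The reciprocal of the `L²` norm of `rawFun ε R`. -/
def normConst (ε R : ℝ) : ℝ := 1 / √(∫ x, rawFun ε R x ^ 2)

/-- The `L²`-normalized competitor. -/
def bump (ε R x : ℝ) : ℝ := normConst ε R * rawFun ε R x

lemma continuous_rawFun (ε R : ℝ) : Continuous (rawFun ε R) := by
  have h0 := continuous_Gfun π 0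
  have h1 := continuous_Gfun π R
  have h2 := continuous_Gfun π (-R)
  unfold rawFun; fun_prop

lemma continuous_bump (ε R : ℝ) : Continuous (bump ε R) :=
  (continuous_rawFun ε R).const_mul _

lemma Gfun_le_rawFun {ε : ℝ} (hε : 0 ≤ ε) (R x : ℝ) : Gfun π 0 x ≤ rawFun ε R x := by
  have h1 := Gfun_nonneg Real.pi_pos R x
  have h2 := Gfun_nonneg Real.pi_pos (-R) x
  have : 0 ≤ ε * (Gfun π R x + Gfun π (-R) x) := by positivity
  unfold rawFun; linarith

lemma rawFun_nonneg {ε : ℝ} (hε : 0 ≤ ε) (R x : ℝ) : 0 ≤ rawFun ε R x :=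
  (Gfun_nonneg Real.pi_pos 0 x).trans (Gfun_le_rawFun hε R x)

lemma rawFun_le {ε : ℝ} (hε : 0 ≤ ε) (hε1 : ε ≤ 1) (R x : ℝ) : rawFun ε R x ≤ 6 := by
  have h0 := Gfun_pi_le_two 0 x
  have h1 := Gfun_pi_le_two R x
  have h2 := Gfun_pi_le_two (-R) x
  unfold rawFun; nlinarith

lemma integrable_rawFun (ε R : ℝ) : Integrable (rawFun ε R) :=
  (integrable_Gfun Real.pi_pos 0).add
    (((integrable_Gfun Real.pi_pos R).add (integrable_Gfun Real.pi_pos (-R))).const_mul ε)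

lemma integrable_Gfun_pi_zero_sq : Integrable (fun x => Gfun π 0 x ^ 2) := by
  simp_rw [Gfun_pi_zero_sq]
  exact (integrable_exp_neg_mul_sq (by positivity)).const_mul _

lemma integral_bumps (ε R : ℝ) :
    ∫ x, ε * (Gfun π R x + Gfun π (-R) x) = 2 * ε * gMass := by
  rw [integral_const_mul, integral_add (integrable_Gfun Real.pi_pos _)
    (integrable_Gfun Real.pi_pos _), integral_Gfun_pi, integral_Gfun_pi]
  ring

lemma integrable_rawFun_sq {ε : ℝ} (hε : 0 ≤ ε) (hε1 : ε ≤ 1) (R : ℝ) :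
    Integrable (fun x => rawFun ε R x ^ 2) := by
  refine ((integrable_rawFun ε R).const_mul 6).mono'
    ((continuous_rawFun ε R).pow 2).aestronglyMeasurable (Eventually.of_forall fun x => ?_)
  have h1 := rawFun_nonneg hε R x
  have h2 := rawFun_le hε hε1 R x
  rw [Real.norm_eq_abs, abs_of_nonneg (by positivity)]
  nlinarith

lemma one_le_integral_rawFun_sq {ε : ℝ} (hε : 0 ≤ ε) (hε1 : ε ≤ 1) (R : ℝ) :
    1 ≤ ∫ x, rawFun ε R x ^ 2 := by
  rw [← integral_Gfun_pi_zero_sq]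
  refine integral_mono integrable_Gfun_pi_zero_sq (integrable_rawFun_sq hε hε1 R) fun x => ?_
  exact pow_le_pow_left₀ (Gfun_nonneg Real.pi_pos 0 x) (Gfun_le_rawFun hε R x) 2

lemma integral_rawFun_sq_le {ε : ℝ} (hε : 0 ≤ ε) (hε1 : ε ≤ 1) (R : ℝ) :
    ∫ x, rawFun ε R x ^ 2 ≤ 1 + 16 * gMass * ε := by
  have hi : Integrable (fun x => ε * (Gfun π R x + Gfun π (-R) x)) :=
    ((integrable_Gfun Real.pi_pos R).add (integrable_Gfun Real.pi_pos (-R))).const_mul ε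
  have : ∫ x, rawFun ε R x ^ 2
      ≤ ∫ x, (Gfun π 0 x ^ 2 + 8 * (ε * (Gfun π R x + Gfun π (-R) x))) := by
    refine integral_mono (integrable_rawFun_sq hε hε1 R)
      (integrable_Gfun_pi_zero_sq.add (hi.const_mul 8)) fun x => ?_
    have h1 := rawFun_le hε hε1 R x
    have h2 := Gfun_pi_le_two 0 x
    have h3 := Gfun_le_rawFun hε R x
    have e : ε * (Gfun π R x + Gfun π (-R) x) = rawFun ε R x - Gfun π 0 x := by
      unfold rawFun; ring
    simp only [e]
    nlinarith
  refine this.trans_eq ?_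
  rw [integral_add integrable_Gfun_pi_zero_sq (hi.const_mul 8), integral_const_mul, integral_bumps,
    integral_Gfun_pi_zero_sq]
  ring

lemma normConst_pos {ε : ℝ} (hε : 0 ≤ ε) (hε1 : ε ≤ 1) (R : ℝ) : 0 < normConst ε R := by
  have := one_le_integral_rawFun_sq hε hε1 R
  unfold normConst
  have : 0 < √(∫ x, rawFun ε R x ^ 2) := Real.sqrt_pos.2 (by linarith)
  positivity

lemma normConst_le_one {ε : ℝ} (hε : 0 ≤ ε) (hε1 : ε ≤ 1) (R : ℝ) : normConst ε R ≤ 1 := by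
  have h := Real.one_le_sqrt.2 (one_le_integral_rawFun_sq hε hε1 R)
  unfold normConst
  rw [div_le_one (by linarith)]
  exact h

lemma one_sub_normConst_le {ε : ℝ} (hε : 0 ≤ ε) (hε1 : ε ≤ 1) (R : ℝ) :
    1 - normConst ε R ≤ 16 * gMass * ε := by
  have h1 := one_le_integral_rawFun_sq hε hε1 R
  have h2 := integral_rawFun_sq_le hε hε1 R
  have hs := Real.one_le_sqrt.2 h1
  have hsq := Real.sq_sqrt (zero_le_one.trans h1)
  have hs2 : √(∫ x, rawFun ε R x ^ 2) ≤ 1 + 16 * gMass * ε := by nlinarith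
  have hc := normConst_pos hε hε1 R
  have hc1 := normConst_le_one hε hε1 R
  have : normConst ε R * √(∫ x, rawFun ε R x ^ 2) = 1 := by
    unfold normConst; field_simp
  nlinarith

lemma bump_nonneg {ε : ℝ} (hε : 0 ≤ ε) (hε1 : ε ≤ 1) (R x : ℝ) : 0 ≤ bump ε R x :=
  mul_nonneg (normConst_pos hε hε1 R).le (rawFun_nonneg hε R x)

lemma bump_le {ε : ℝ} (hε : 0 ≤ ε) (hε1 : ε ≤ 1) (R x : ℝ) : bump ε R x ≤ rawFun ε R x :=
  mul_le_of_le_one_left (rawFun_nonneg hε R x) (normConst_le_one hε hε1 R)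

lemma integral_bump_sq {ε : ℝ} (hε : 0 ≤ ε) (hε1 : ε ≤ 1) (R : ℝ) :
    ∫ x, bump ε R x ^ 2 = 1 := by
  have h1 := one_le_integral_rawFun_sq hε hε1 R
  simp_rw [bump, mul_pow]
  rw [integral_const_mul, normConst, div_pow, Real.sq_sqrt (by linarith)]
  field_simp

lemma LpNormR_two_bump {ε : ℝ} (hε : 0 ≤ ε) (hε1 : ε ≤ 1) (R : ℝ) :
    LpNormR 2 volume (bump ε R) = 1 := by
  unfold LpNormR
  simp only [Real.rpow_two, sq_abs, integral_bump_sq hε hε1 R, Real.one_rpow]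

/-- `l1Const * ε` bounds the `L¹` distance to `G_{π,0}` both of the competitor and of the modulus
of its Fourier transform. -/
def l1Const : ℝ := 2 * gMass + 16 * gMass ^ 2

lemma integral_abs_bump_sub_le {ε : ℝ} (hε : 0 ≤ ε) (hε1 : ε ≤ 1) (R : ℝ) :
    ∫ x, |bump ε R x - Gfun π 0 x| ≤ l1Const * ε := by
  have hi : Integrable (fun x => ε * (Gfun π R x + Gfun π (-R) x)) :=
    ((integrable_Gfun Real.pi_pos R).add (integrable_Gfun Real.pi_pos (-R))).const_mul ε
  have hg := integrable_Gfun Real.pi_pos 0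
  have hc := normConst_pos hε hε1 R
  have hc1 := normConst_le_one hε hε1 R
  have hc2 := one_sub_normConst_le hε hε1 R
  calc ∫ x, |bump ε R x - Gfun π 0 x|
      ≤ ∫ x, (ε * (Gfun π R x + Gfun π (-R) x) + (16 * gMass * ε) * Gfun π 0 x) := by
        refine integral_mono (((integrable_rawFun ε R).const_mul _).sub hg).abs
          (hi.add (hg.const_mul _)) fun x => ?_
        have h0 := Gfun_nonneg Real.pi_pos 0 x
        have h1 := Gfun_nonneg Real.pi_pos R x
        have h2 := Gfun_nonneg Real.pi_pos (-R) x
        have h3 : 0 ≤ ε * (Gfun π R x + Gfun π (-R) x) := by positivity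
        have e : bump ε R x - Gfun π 0 x = normConst ε R * (ε * (Gfun π R x + Gfun π (-R) x))
            - (1 - normConst ε R) * Gfun π 0 x := by
          unfold bump rawFun; ring
        simp only [e]
        rw [abs_le]
        constructor <;> nlinarith [mul_nonneg hc.le h3, mul_nonneg (sub_nonneg.2 hc1) h0,
          mul_le_mul_of_nonneg_right hc1 h3, mul_le_mul_of_nonneg_right hc2 h0]
    _ = l1Const * ε := by
        rw [integral_add hi (hg.const_mul _), integral_bumps, integral_const_mul, integral_Gfun_pi]
        unfold l1Const; ring

/-- The Fourier transform turns the translation by `r` into a phase. -/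
lemma fourier_Gfun_pi (r ξ : ℝ) : 𝓕 (fun y => (Gfun π r y : ℂ)) ξ
    = (Gfun π 0 ξ : ℂ) * Complex.exp (((-2 * π * r * ξ : ℝ) : ℂ) * Complex.I) := by
  have h := congrFun (fourier_gaussian_pi' (b := 1) (by simp) (r : ℂ)) ξ
  have e : (fun y : ℝ => (Gfun π r y : ℂ))
      = fun y : ℝ => (((2 : ℝ) ^ ((1 : ℝ) / 4) * Real.exp (-π * r ^ 2) : ℝ) : ℂ) *
        Complex.exp (-↑π * 1 * ↑y ^ 2 + 2 * ↑π * (r : ℂ) * ↑y) := by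
    funext y
    rw [Gfun_pi]
    push_cast
    rw [mul_assoc, ← Complex.exp_add]
    congr 2
    ring
  rw [e]
  have e2 : 𝓕 (fun y : ℝ => (((2 : ℝ) ^ ((1 : ℝ) / 4) * Real.exp (-π * r ^ 2) : ℝ) : ℂ) *
        Complex.exp (-↑π * 1 * ↑y ^ 2 + 2 * ↑π * (r : ℂ) * ↑y)) ξ
      = (((2 : ℝ) ^ ((1 : ℝ) / 4) * Real.exp (-π * r ^ 2) : ℝ) : ℂ) *
        𝓕 (fun y : ℝ => Complex.exp (-↑π * 1 * ↑y ^ 2 + 2 * ↑π * (r : ℂ) * ↑y)) ξ := by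
    simp only [Real.fourier_eq', smul_eq_mul]
    rw [← integral_const_mul]
    congr 1
    funext v
    ring
  rw [e2, h, Gfun_pi]
  push_cast
  simp only [Complex.one_cpow, div_one, one_mul]
  rw [mul_assoc, mul_assoc, ← Complex.exp_add, ← Complex.exp_add]
  congr 2
  linear_combination (-(π : ℂ) * r ^ 2) * Complex.I_sq

lemma fourier_bump (ε R ξ : ℝ) : 𝓕 (fun y => (bump ε R y : ℂ)) ξ
    = (normConst ε R : ℂ) * ((Gfun π 0 ξ : ℂ) * (1 + ε *
      (Complex.exp (((-2 * π * R * ξ : ℝ) : ℂ) * Complex.I)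
        + Complex.exp (((-2 * π * (-R) * ξ : ℝ) : ℂ) * Complex.I)))) := by
  have hint : ∀ r : ℝ, Integrable (fun v : ℝ =>
      Complex.exp (((-2 * π * inner ℝ v ξ : ℝ) : ℂ) * Complex.I) * (Gfun π r v : ℂ)) := by
    intro r
    refine (integrable_Gfun Real.pi_pos r).mono' ?_ (Eventually.of_forall fun v => ?_)
    · have := continuous_Gfun π r
      refine Continuous.aestronglyMeasurable ?_
      fun_prop
    · rw [norm_mul, Complex.norm_exp_ofReal_mul_I, one_mul, Complex.norm_real, Real.norm_eq_abs,
        abs_of_nonneg (Gfun_nonneg Real.pi_pos r v)]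
  have h0 := fourier_Gfun_pi 0 ξ
  have h1 := fourier_Gfun_pi R ξ
  have h2 := fourier_Gfun_pi (-R) ξ
  simp only [mul_zero, zero_mul, Complex.ofReal_zero, Complex.exp_zero, mul_one] at h0
  simp only [Real.fourier_eq', smul_eq_mul] at h0 h1 h2 ⊢
  have e : ∀ v : ℝ, Complex.exp (((-2 * π * inner ℝ v ξ : ℝ) : ℂ) * Complex.I) * (bump ε R v : ℂ)
      = (normConst ε R : ℂ) *
        (Complex.exp (((-2 * π * inner ℝ v ξ : ℝ) : ℂ) * Complex.I) * (Gfun π 0 v : ℂ)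
        + ε * (Complex.exp (((-2 * π * inner ℝ v ξ : ℝ) : ℂ) * Complex.I) * (Gfun π R v : ℂ)
        + Complex.exp (((-2 * π * inner ℝ v ξ : ℝ) : ℂ) * Complex.I) * (Gfun π (-R) v : ℂ))) := by
    intro v
    unfold bump rawFun
    push_cast
    ring
  simp_rw [e]
  rw [integral_const_mul, integral_add (hint 0), integral_const_mul,
    integral_add (hint R) (hint (-R)), h0, h1, h2]
  · ring
  · exact ((hint R).add (hint (-R))).const_mul (ε : ℂ)

lemma abs_norm_fourier_bump_sub_le {ε : ℝ} (hε : 0 ≤ ε) (hε1 : ε ≤ 1) (R ξ : ℝ) :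
    |‖𝓕 (fun y => (bump ε R y : ℂ)) ξ‖ - Gfun π 0 ξ| ≤ (16 * gMass * ε + 2 * ε) * Gfun π 0 ξ := by
  have hc := normConst_pos hε hε1 R
  have hc1 := normConst_le_one hε hε1 R
  have hc2 := one_sub_normConst_le hε hε1 R
  have h0 := Gfun_nonneg Real.pi_pos 0 ξ
  have hn : Gfun π 0 ξ = ‖(Gfun π 0 ξ : ℂ)‖ := by
    rw [Complex.norm_real, Real.norm_eq_abs, abs_of_nonneg h0]
  conv_lhs => rw [hn]
  refine (abs_norm_sub_norm_le _ _).trans ?_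
  rw [fourier_bump]
  set E := Complex.exp (((-2 * π * R * ξ : ℝ) : ℂ) * Complex.I)
        + Complex.exp (((-2 * π * (-R) * ξ : ℝ) : ℂ) * Complex.I) with hE
  have hEn : ‖E‖ ≤ 2 := by
    refine (norm_add_le _ _).trans ?_
    rw [Complex.norm_exp_ofReal_mul_I, Complex.norm_exp_ofReal_mul_I]
    norm_num
  have e : (normConst ε R : ℂ) * ((Gfun π 0 ξ : ℂ) * (1 + ε * E)) - (Gfun π 0 ξ : ℂ)
      = (((normConst ε R - 1) * Gfun π 0 ξ : ℝ) : ℂ)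
        + ((normConst ε R * Gfun π 0 ξ * ε : ℝ) : ℂ) * E := by
    push_cast; ring
  rw [e]
  refine (norm_add_le _ _).trans ?_
  rw [norm_mul, Complex.norm_real, Complex.norm_real, Real.norm_eq_abs, Real.norm_eq_abs, abs_mul,
    abs_of_nonneg h0, abs_of_nonpos (by linarith : normConst ε R - 1 ≤ 0),
    abs_of_nonneg (by positivity : 0 ≤ normConst ε R * Gfun π 0 ξ * ε)]
  have h1 : normConst ε R * Gfun π 0 ξ * ε * ‖E‖ ≤ 1 * Gfun π 0 ξ * ε * 2 := by gcongr
  nlinarith [mul_le_mul_of_nonneg_right hc2 h0]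

lemma abs_deficit_bump_le {ε : ℝ} (hε : 0 ≤ ε) (hε1 : ε ≤ 1) (R : ℝ) :
    |BHdeficit (bump ε R)| ≤
      2 * lipConst (2 * (3 + 16 * gMass) + 6) * l1Const * ε := by
  have hI := gMass_nonneg
  set B := 2 * (3 + 16 * gMass) + 6 with hB
  have hg := integrable_Gfun Real.pi_pos 0
  have hcont : Continuous (fun ξ => ‖𝓕 (fun y => (bump ε R y : ℂ)) ξ‖) := by
    simp_rw [fourier_bump]
    have := continuous_Gfun π 0
    fun_prop
  have hclose := abs_norm_fourier_bump_sub_le hε hε1 R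
  have hle : ∀ ξ, ‖𝓕 (fun y => (bump ε R y : ℂ)) ξ‖ ≤ (3 + 16 * gMass) * Gfun π 0 ξ := by
    intro ξ
    have h1 := (abs_le.1 (hclose ξ)).2
    have h0 := Gfun_nonneg Real.pi_pos 0 ξ
    have : (16 * gMass * ε + 2 * ε) * Gfun π 0 ξ ≤ (16 * gMass + 2) * Gfun π 0 ξ := by
      refine mul_le_mul_of_nonneg_right ?_ h0
      nlinarith
    linarith
  have hint : Integrable (fun ξ => ‖𝓕 (fun y => (bump ε R y : ℂ)) ξ‖) := by
    refine (hg.const_mul (3 + 16 * gMass)).mono' hcont.aestronglyMeasurable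
      (Eventually.of_forall fun ξ => ?_)
    rw [norm_norm]
    exact hle ξ
  have hgB : ∀ x, Gfun π 0 x ≤ B := fun x => by linarith [Gfun_pi_le_two 0 x]
  have s1 := abs_entropy_sub_le (B := B) (continuous_bump ε R).measurable (measurable_Gfun π 0)
    (bump_nonneg hε hε1 R) (Gfun_nonneg Real.pi_pos 0)
    (fun x => by linarith [bump_le hε hε1 R x, rawFun_le hε hε1 R x]) hgB
    ((integrable_rawFun ε R).const_mul _) hg
  have s2 := abs_entropy_sub_le (B := B) hcont.measurable (measurable_Gfun π 0)
    (fun ξ => norm_nonneg _) (Gfun_nonneg Real.pi_pos 0)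
    (fun ξ => by nlinarith [hle ξ, Gfun_pi_le_two 0 ξ]) hgB hint hg
  have i1 := integral_abs_bump_sub_le hε hε1 R
  have i2 : ∫ ξ, |‖𝓕 (fun y => (bump ε R y : ℂ)) ξ‖ - Gfun π 0 ξ| ≤ l1Const * ε := by
    refine (integral_mono (hint.sub hg).abs (hg.const_mul _) hclose).trans_eq ?_
    rw [integral_const_mul, integral_Gfun_pi]
    unfold l1Const; ring
  have hL : 0 ≤ lipConst B := by unfold lipConst; positivity
  have j1 := s1.trans (mul_le_mul_of_nonneg_left i1 hL)
  have j2 := s2.trans (mul_le_mul_of_nonneg_left i2 hL)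
  rw [entropy_Gfun_pi_zero] at j1 j2
  rw [abs_le] at j1 j2 ⊢
  unfold BHdeficit
  constructor <;> nlinarith [j1.1, j1.2, j2.1, j2.2]

/-! ### Weighted integrals -/

lemma measurable_weight (l : ℝ) : Measurable (fun x : ℝ => ENNReal.ofReal (|x| ^ l)) := by
  fun_prop

lemma integral_eta (l : ℝ) (f : ℝ → ℝ) : ∫ x, f x ∂(etaMeasure l) = ∫ x, f x * |x| ^ l := by
  unfold etaMeasure
  rw [integral_withDensity_eq_integral_toReal_smul (measurable_weight l)
    (Eventually.of_forall fun x => ENNReal.ofReal_lt_top)]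
  refine integral_congr_ae (Eventually.of_forall fun x => ?_)
  simp only [smul_eq_mul]
  rw [ENNReal.toReal_ofReal (by positivity), mul_comm]

lemma integrable_eta_iff (l : ℝ) (f : ℝ → ℝ) :
    Integrable f (etaMeasure l) ↔ Integrable (fun x => f x * |x| ^ l) := by
  unfold etaMeasure
  rw [integrable_withDensity_iff (measurable_weight l)
    (Eventually.of_forall fun x => ENNReal.ofReal_lt_top)]
  have e : ∀ x : ℝ, (ENNReal.ofReal (|x| ^ l)).toReal = |x| ^ l := fun x =>
    ENNReal.toReal_ofReal (by positivity)
  simp_rw [e]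

lemma add_rpow_le_two {p a b : ℝ} (hp : 0 ≤ p) (ha : 0 ≤ a) (hb : 0 ≤ b) :
    (a + b) ^ p ≤ 2 ^ p * (a ^ p + b ^ p) := by
  have ha' := Real.rpow_nonneg ha p
  have hb' := Real.rpow_nonneg hb p
  have h2 : (0 : ℝ) ≤ 2 ^ p := by positivity
  rcases le_total a b with h | h
  · calc (a + b) ^ p ≤ (2 * b) ^ p := Real.rpow_le_rpow (by positivity) (by linarith) hp
      _ = 2 ^ p * b ^ p := Real.mul_rpow (by norm_num) hb
      _ ≤ _ := by nlinarith
  · calc (a + b) ^ p ≤ (2 * a) ^ p := Real.rpow_le_rpow (by positivity) (by linarith) hp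
      _ = 2 ^ p * a ^ p := Real.mul_rpow (by norm_num) ha
      _ ≤ _ := by nlinarith

lemma Gfun_rpow {a : ℝ} (ha : 0 < a) (p x : ℝ) :
    Gfun a 0 x ^ p = ((2 * a / π) ^ ((1 : ℝ) / 4)) ^ p * Real.exp (-(p * a) * x ^ 2) := by
  unfold Gfun
  rw [Real.mul_rpow (by positivity) (Real.exp_pos _).le, ← Real.exp_mul]
  congr 2
  ring

lemma integrable_Gfun_rpow {a p : ℝ} (ha : 0 < a) (hp : 0 < p) :
    Integrable (fun x => Gfun a 0 x ^ p) := by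
  simp_rw [Gfun_rpow ha]
  exact (integrable_exp_neg_mul_sq (by positivity)).const_mul _

lemma integrable_Gfun_rpow_mul {a p l : ℝ} (ha : 0 < a) (hp : 0 < p) (hl : 0 < l) :
    Integrable (fun x => Gfun a 0 x ^ p * |x| ^ l) := by
  have h := (integrable_rpow_mul_exp_neg_mul_sq (b := p * a) (by positivity)
    (s := l) (by linarith)).norm.const_mul (((2 * a / π) ^ ((1 : ℝ) / 4)) ^ p)
  -- `x ^ l` is junk-valued for `x < 0`, so the integrand is dominated by a sum with the reflection.
  refine (h.add h.comp_neg).mono' ?_ (Eventually.of_forall fun x => ?_)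
  · have := measurable_Gfun a 0
    exact Measurable.aestronglyMeasurable (by fun_prop)
  have hA : 0 ≤ ((2 * a / π) ^ ((1 : ℝ) / 4)) ^ p := by positivity
  have hE := (Real.exp_pos (-(p * a) * x ^ 2)).le
  have hx : |x| ^ l ≤ |x ^ l| + |(-x) ^ l| := by
    rcases abs_cases x with ⟨e, -⟩ | ⟨e, -⟩
    · rw [e]; linarith [le_abs_self (x ^ l), abs_nonneg ((-x) ^ l)]
    · rw [e]; linarith [le_abs_self ((-x) ^ l), abs_nonneg (x ^ l)]
  rw [Gfun_rpow ha, Real.norm_eq_abs, abs_of_nonneg (by positivity)]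
  simp only [Pi.add_apply, norm_mul, Real.norm_eq_abs, Real.abs_exp, neg_sq]
  refine (mul_le_mul_of_nonneg_left hx (by positivity)).trans_eq ?_
  ring

/-- A bound for the weighted mass of `G_{a,r}` in terms of its centre, from
`|y + r|^l ≤ 2^l (|y|^l + |r|^l)`. -/
lemma Gfun_weighted {a p l : ℝ} (ha : 0 < a) (hp : 0 < p) (hl : 0 < l) (r : ℝ) :
    Integrable (fun x => Gfun a r x ^ p * |x| ^ l) ∧
    ∫ x, Gfun a r x ^ p * |x| ^ l
      ≤ 2 ^ l * ((∫ x, Gfun a 0 x ^ p * |x| ^ l) + |r| ^ l * ∫ x, Gfun a 0 x ^ p) := by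
  have i1 := integrable_Gfun_rpow_mul ha hp hl
  have i2 := integrable_Gfun_rpow (a := a) ha hp
  have hdom : Integrable (fun y => 2 ^ l * (Gfun a 0 y ^ p * |y| ^ l + |r| ^ l * Gfun a 0 y ^ p)) :=
    (i1.add (i2.const_mul (|r| ^ l))).const_mul ((2 : ℝ) ^ l)
  have hle : ∀ y, Gfun a 0 y ^ p * |y + r| ^ l
      ≤ 2 ^ l * (Gfun a 0 y ^ p * |y| ^ l + |r| ^ l * Gfun a 0 y ^ p) := by
    intro y
    have hG := Real.rpow_nonneg (Gfun_nonneg ha 0 y) p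
    have h : |y + r| ^ l ≤ 2 ^ l * (|y| ^ l + |r| ^ l) :=
      (Real.rpow_le_rpow (abs_nonneg _) (abs_add_le y r) hl.le).trans
        (add_rpow_le_two hl.le (abs_nonneg _) (abs_nonneg _))
    nlinarith [mul_le_mul_of_nonneg_left h hG]
  have hi : Integrable (fun y => Gfun a 0 y ^ p * |y + r| ^ l) := by
    refine hdom.mono' ?_ (Eventually.of_forall fun y => ?_)
    · have := measurable_Gfun a 0
      exact Measurable.aestronglyMeasurable (by fun_prop)
    · have hG := Real.rpow_nonneg (Gfun_nonneg ha 0 y) p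
      rw [Real.norm_eq_abs, abs_of_nonneg (by positivity)]
      exact hle y
  have e : (fun x => Gfun a r x ^ p * |x| ^ l)
      = fun x => (fun y => Gfun a 0 y ^ p * |y + r| ^ l) (x - r) := by
    funext x
    simp only [sub_add_cancel]
    rw [Gfun_shift]
  rw [e]
  refine ⟨hi.comp_sub_right r, ?_⟩
  rw [integral_sub_right_eq_self (fun y => Gfun a 0 y ^ p * |y + r| ^ l) r]
  refine (integral_mono hi hdom hle).trans_eq ?_
  rw [integral_const_mul, integral_add i1 (i2.const_mul _), integral_const_mul]

lemma le_integral_of_le_on {F : ℝ → ℝ} (hF : Integrable F) (hF0 : ∀ x, 0 ≤ F x) {α β m : ℝ}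
    (hαβ : α ≤ β) (hm : ∀ x ∈ Set.Icc α β, m ≤ F x) : m * (β - α) ≤ ∫ x, F x := by
  have h := setIntegral_ge_of_const_le (μ := volume) (s := Set.Icc α β) (c := m)
    measurableSet_Icc (by simp) hm hF.integrableOn
  have h2 : volume.real (Set.Icc α β) = β - α := by
    rw [Real.volume_real_Icc_of_le hαβ]
  rw [h2, smul_eq_mul, mul_comm] at h
  exact h.trans (setIntegral_le_integral hF (Eventually.of_forall hF0))

/-- The value `G_{π,0}(1)`, a lower bound of `G_{π,r}` within distance `1` of `r`. -/
def gOne : ℝ := (2 : ℝ) ^ ((1 : ℝ) / 4) * Real.exp (-π)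

lemma gOne_pos : 0 < gOne := by unfold gOne; positivity

lemma gOne_le {r x : ℝ} (h : |x - r| ≤ 1) : gOne ≤ Gfun π r x := by
  rw [Gfun_pi, gOne]
  refine mul_le_mul_of_nonneg_left (Real.exp_le_exp.2 ?_) (by positivity)
  have : (x - r) ^ 2 ≤ 1 := by rw [← sq_abs]; nlinarith [abs_nonneg (x - r)]
  nlinarith [Real.pi_pos]

/-- A Gaussian that is at least `τ` at two points is at least `τ` between them. -/
lemma le_Gfun_of_between {a r τ x₁ x₂ x : ℝ} (ha : 0 < a) (h1 : τ ≤ Gfun a r x₁)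
    (h2 : τ ≤ Gfun a r x₂) (hx1 : x₁ ≤ x) (hx2 : x ≤ x₂) : τ ≤ Gfun a r x := by
  have mono : ∀ y, (x - r) ^ 2 ≤ (y - r) ^ 2 → Gfun a r y ≤ Gfun a r x := by
    intro y hy
    unfold Gfun
    refine mul_le_mul_of_nonneg_left (Real.exp_le_exp.2 ?_) (by positivity)
    nlinarith
  rcases le_total x r with h | h
  · exact h1.trans (mono x₁ (by nlinarith))
  · exact h2.trans (mono x₂ (by nlinarith))

/-- The weighted `p`-mass of the competitor is finite and of order at most `ε^p R^l`. -/
lemma bump_weighted_upper {p l : ℝ} (hp : 0 < p) (hl : 0 < l) :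
    ∃ K : ℝ, 0 < K ∧ ∀ ε R : ℝ, 0 ≤ ε → ε ≤ 1 → 1 ≤ R →
      Integrable (fun x => |bump ε R x| ^ p * |x| ^ l) ∧
      (1 ≤ ε ^ p * R ^ l → ∫ x, |bump ε R x| ^ p * |x| ^ l ≤ K * (ε ^ p * R ^ l)) := by
  set A₀ := ∫ x, Gfun π 0 x ^ p * |x| ^ l with hA₀
  set B₀ := ∫ x, Gfun π 0 x ^ p with hB₀
  have hA : 0 ≤ A₀ := integral_nonneg fun x =>
    mul_nonneg (Real.rpow_nonneg (Gfun_nonneg Real.pi_pos 0 x) p) (by positivity)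
  have hB : 0 ≤ B₀ := integral_nonneg fun x => Real.rpow_nonneg (Gfun_nonneg Real.pi_pos 0 x) p
  set D := (2 : ℝ) ^ l * (A₀ + B₀) with hD
  have hD0 : 0 ≤ D := by positivity
  refine ⟨2 ^ p * (A₀ + 2 ^ p * (2 * D)) + 1, by positivity, fun ε R hε hε1 hR => ?_⟩
  have hRl : 1 ≤ R ^ l := Real.one_le_rpow hR hl.le
  have hint : ∀ r : ℝ, |r| = R → Integrable (fun x => Gfun π r x ^ p * |x| ^ l) ∧
      ∫ x, Gfun π r x ^ p * |x| ^ l ≤ D * R ^ l := by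
    intro r hr
    obtain ⟨h1, h2⟩ := Gfun_weighted (p := p) (l := l) Real.pi_pos hp hl r
    refine ⟨h1, h2.trans ?_⟩
    rw [hr, hD, mul_assoc]
    refine mul_le_mul_of_nonneg_left ?_ (by positivity)
    nlinarith
  obtain ⟨i1, b1⟩ := hint R (abs_of_nonneg (by linarith))
  obtain ⟨i2, b2⟩ := hint (-R) (by rw [abs_neg, abs_of_nonneg (by linarith)])
  have i0 := integrable_Gfun_rpow_mul Real.pi_pos hp hl
  have i12 : Integrable (fun x => ε ^ p * 2 ^ p *
      (Gfun π R x ^ p * |x| ^ l + Gfun π (-R) x ^ p * |x| ^ l)) := (i1.add i2).const_mul _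
  have idom : Integrable (fun x => 2 ^ p * (Gfun π 0 x ^ p * |x| ^ l + ε ^ p * 2 ^ p *
      (Gfun π R x ^ p * |x| ^ l + Gfun π (-R) x ^ p * |x| ^ l))) := (i0.add i12).const_mul _
  have hle : ∀ x, |bump ε R x| ^ p * |x| ^ l ≤ 2 ^ p * (Gfun π 0 x ^ p * |x| ^ l + ε ^ p * 2 ^ p *
      (Gfun π R x ^ p * |x| ^ l + Gfun π (-R) x ^ p * |x| ^ l)) := by
    intro x
    have g0 := Gfun_nonneg Real.pi_pos 0 x
    have g1 := Gfun_nonneg Real.pi_pos R x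
    have g2 := Gfun_nonneg Real.pi_pos (-R) x
    have s1 : |bump ε R x| ^ p ≤ rawFun ε R x ^ p := by
      rw [abs_of_nonneg (bump_nonneg hε hε1 R x)]
      exact Real.rpow_le_rpow (bump_nonneg hε hε1 R x) (bump_le hε hε1 R x) hp.le
    have s2 : rawFun ε R x ^ p
        ≤ 2 ^ p * (Gfun π 0 x ^ p + ε ^ p * 2 ^ p * (Gfun π R x ^ p + Gfun π (-R) x ^ p)) := by
      refine (add_rpow_le_two hp.le g0 (by positivity)).trans ?_
      rw [Real.mul_rpow hε (by positivity), mul_assoc (ε ^ p)]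
      gcongr
      exact add_rpow_le_two hp.le g1 g2
    refine (mul_le_mul_of_nonneg_right (s1.trans s2) (by positivity)).trans_eq ?_
    ring
  refine ⟨idom.mono' ?_ (Eventually.of_forall fun x => ?_), fun hone => ?_⟩
  · have := (continuous_bump ε R).measurable
    exact Measurable.aestronglyMeasurable (by fun_prop)
  · rw [Real.norm_eq_abs, abs_of_nonneg (by positivity)]
    exact hle x
  · refine (integral_mono_of_nonneg (Eventually.of_forall fun x => by positivity) idom
      (Eventually.of_forall hle)).trans ?_
    rw [integral_const_mul, integral_add i0 i12, integral_const_mul, integral_add i1 i2, ← hA₀]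
    have hεp : 0 ≤ ε ^ p := by positivity
    have t1 : A₀ ≤ A₀ * (ε ^ p * R ^ l) := by nlinarith
    have t2 : ε ^ p * 2 ^ p * ((∫ x, Gfun π R x ^ p * |x| ^ l) + ∫ x, Gfun π (-R) x ^ p * |x| ^ l)
        ≤ ε ^ p * 2 ^ p * (D * R ^ l + D * R ^ l) := by gcongr
    have h2p : (0 : ℝ) ≤ 2 ^ p := by positivity
    calc _ ≤ 2 ^ p * (A₀ * (ε ^ p * R ^ l) + ε ^ p * 2 ^ p * (D * R ^ l + D * R ^ l)) :=
          mul_le_mul_of_nonneg_left (add_le_add t1 t2) h2p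
      _ = 2 ^ p * (A₀ + 2 ^ p * (2 * D)) * (ε ^ p * R ^ l) := by ring
      _ ≤ _ := by nlinarith

/-- Near `R` and near `-R` the competitor is at least a fixed multiple of `ε`. -/
lemma bump_lower {ε R x : ℝ} (hε : 0 ≤ ε) (hc : 1 / 2 ≤ normConst ε R)
    (hx : |x - R| ≤ 1 ∨ |x - -R| ≤ 1) : ε * gOne / 2 ≤ bump ε R x := by
  have g0 := Gfun_nonneg Real.pi_pos 0 x
  have g1 := Gfun_nonneg Real.pi_pos R x
  have g2 := Gfun_nonneg Real.pi_pos (-R) x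
  have h : gOne ≤ Gfun π R x + Gfun π (-R) x := by
    rcases hx with h | h
    · linarith [gOne_le h]
    · linarith [gOne_le h]
  have h2 : ε * gOne ≤ rawFun ε R x := by
    unfold rawFun; nlinarith [mul_le_mul_of_nonneg_left h hε]
  have := gOne_pos
  unfold bump
  nlinarith [mul_nonneg hε this.le]

lemma bump_weighted_lower {p l ε R : ℝ} (hp : 0 < p) (hl : 0 < l) (hε : 0 ≤ ε) (hε1 : ε ≤ 1)
    (hR : 1 ≤ R) (hc : 1 / 2 ≤ normConst ε R) :
    (gOne / 2) ^ p * (ε ^ p * R ^ l) ≤ ∫ x, |bump ε R x| ^ p * |x| ^ l := by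
  obtain ⟨K, -, hK⟩ := bump_weighted_upper hp hl
  have hi := (hK ε R hε hε1 hR).1
  have hg := gOne_pos
  have h := le_integral_of_le_on hi (fun x => by positivity) (α := R) (β := R + 1)
    (m := (gOne / 2) ^ p * (ε ^ p * R ^ l)) (by linarith) ?_
  · linarith
  intro x hx
  have h1 := bump_lower (x := x) hε hc (Or.inl (abs_le.2 ⟨by linarith [hx.1], by linarith [hx.2]⟩))
  have h0 : 0 ≤ ε * gOne / 2 := by positivity
  have h2 : (gOne / 2) ^ p * ε ^ p ≤ |bump ε R x| ^ p := by
    rw [← Real.mul_rpow (by positivity) hε]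
    refine Real.rpow_le_rpow (by positivity) ?_ hp.le
    refine le_trans ?_ (h1.trans (le_abs_self _))
    linarith
  have h3 : R ^ l ≤ |x| ^ l :=
    Real.rpow_le_rpow (by linarith) (hx.1.trans (le_abs_self _)) hl.le
  rw [← mul_assoc]
  exact mul_le_mul h2 h3 (by positivity) (by positivity)

/-! ### Distance to the optimizers -/

lemma integrable_sub_weighted {p l ε R a : ℝ} (hp : 0 < p) (hl : 0 < l) (hε : 0 ≤ ε)
    (hε1 : ε ≤ 1) (hR : 1 ≤ R) (ha : 0 < a) (r : ℝ) :
    Integrable (fun x => |bump ε R x - Gfun a r x| ^ p * |x| ^ l) := by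
  obtain ⟨K, -, hK⟩ := bump_weighted_upper hp hl
  have hi := (hK ε R hε hε1 hR).1
  have hG := (Gfun_weighted (p := p) (l := l) ha hp hl r).1
  refine ((hi.add hG).const_mul ((2 : ℝ) ^ p)).mono' ?_ (Eventually.of_forall fun x => ?_)
  · have := (continuous_bump ε R).measurable
    have := measurable_Gfun a r
    exact Measurable.aestronglyMeasurable (by fun_prop)
  · rw [Real.norm_eq_abs, abs_of_nonneg (by positivity)]
    have g := Gfun_nonneg ha r x
    have h1 : |bump ε R x - Gfun a r x| ≤ |bump ε R x| + Gfun a r x := by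
      refine (abs_sub _ _).trans ?_
      rw [abs_of_nonneg g]
    have h2 := (Real.rpow_le_rpow (abs_nonneg _) h1 hp.le).trans
      (add_rpow_le_two hp.le (abs_nonneg _) g)
    refine (mul_le_mul_of_nonneg_right h2 (by positivity)).trans_eq ?_
    simp only [Pi.add_apply]
    ring

/-- No Gaussian is close to the competitor. If `G_{a,r}` is small throughout one of the two side
bumps, the distance is at least the size of that bump. Otherwise `G_{a,r}` is large on all of
`[-R, R]`, and its weighted mass exceeds that of the competitor by a factor of order `R`. -/
lemma dist_lower {p l : ℝ} (hp : 0 < p) (hl : 0 < l) :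
    ∃ C₀ R₀ : ℝ, 0 < C₀ ∧ ∀ ε R : ℝ, 0 ≤ ε → ε ≤ 1 → 1 ≤ R → R₀ ≤ R →
      1 ≤ ε ^ p * R ^ l → 1 / 2 ≤ normConst ε R → ∀ a r : ℝ, 0 < a →
      C₀ * (ε ^ p * R ^ l) ≤ ∫ x, |bump ε R x - Gfun a r x| ^ p * |x| ^ l := by
  obtain ⟨K, hK0, hK⟩ := bump_weighted_upper hp hl
  have hg := gOne_pos
  -- `q R ε^p R^l` is the lower bound obtained from `[R/2, R]` for `2^{-p}` times the mass of a
  -- Gaussian which is at least `ε gOne / 4` on that interval.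
  set q : ℝ := (gOne / 4) ^ p * (1 / 2) ^ l * (1 / 2) / 2 ^ p with hq
  have hq0 : 0 < q := by positivity
  refine ⟨min 1 ((gOne / 4) ^ p), (K + 1) / q, by positivity, ?_⟩
  intro ε R hε hε1 hR hR0 hone hc a r ha
  obtain ⟨hi, hub⟩ := hK ε R hε hε1 hR
  have hub := hub hone
  have hT := integrable_sub_weighted (p := p) (l := l) hp hl hε hε1 hR ha r
  have hGi := (Gfun_weighted (p := p) (l := l) ha hp hl r).1
  have hX : 0 ≤ ε ^ p * R ^ l := by linarith
  set τ := ε * gOne / 4 with hτ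
  have hτ0 : 0 ≤ τ := by positivity
  have hτp : τ ^ p = (gOne / 4) ^ p * ε ^ p := by
    rw [← Real.mul_rpow (by positivity) hε]; congr 1; rw [hτ]; ring
  have small : ∀ s t : ℝ, t = s + 1 → (∀ x ∈ Set.Icc s t, R ≤ |x|) →
      (∀ x ∈ Set.Icc s t, |x - R| ≤ 1 ∨ |x - -R| ≤ 1) →
      (∀ x ∈ Set.Icc s t, Gfun a r x < τ) →
      min 1 ((gOne / 4) ^ p) * (ε ^ p * R ^ l)
        ≤ ∫ x, |bump ε R x - Gfun a r x| ^ p * |x| ^ l := by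
    intro s t hst hRx hnear hsm
    have h := le_integral_of_le_on hT (fun x => by positivity) (α := s) (β := t)
      (m := τ ^ p * R ^ l) (by linarith) ?_
    · rw [hst, add_sub_cancel_left, mul_one, hτp, mul_assoc] at h
      exact (mul_le_mul_of_nonneg_right (min_le_right _ _) hX).trans h
    intro x hx
    have h1 := bump_lower hε hc (hnear x hx)
    have h2 := hsm x hx
    refine mul_le_mul (Real.rpow_le_rpow hτ0 ?_ hp.le)
      (Real.rpow_le_rpow (by linarith) (hRx x hx) hl.le) (by positivity) (by positivity)
    refine le_trans ?_ (le_abs_self _)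
    have : ε * gOne / 2 = 2 * τ := by rw [hτ]; ring
    linarith
  by_cases hA : ∀ x ∈ Set.Icc R (R + 1), Gfun a r x < τ
  · exact small R (R + 1) rfl (fun x hx => hx.1.trans (le_abs_self _))
      (fun x hx => Or.inl (abs_le.2 ⟨by linarith [hx.1], by linarith [hx.2]⟩)) hA
  by_cases hB : ∀ x ∈ Set.Icc (-R - 1) (-R), Gfun a r x < τ
  · exact small (-R - 1) (-R) (by ring) (fun x hx => by linarith [neg_le_abs x, hx.2])
      (fun x hx => Or.inr (abs_le.2 ⟨by linarith [hx.1], by linarith [hx.2]⟩)) hB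
  push Not at hA hB
  obtain ⟨x₂, hx₂, h₂⟩ := hA
  obtain ⟨x₁, hx₁, h₁⟩ := hB
  have hG : τ ^ p * (R / 2) ^ l * (R - R / 2) ≤ ∫ x, Gfun a r x ^ p * |x| ^ l := by
    refine le_integral_of_le_on hGi (fun x => ?_) (by linarith) fun x hx => ?_
    · exact mul_nonneg (Real.rpow_nonneg (Gfun_nonneg ha r x) p) (by positivity)
    · have h3 := le_Gfun_of_between (x := x) ha h₁ h₂ (by linarith [hx₁.2, hx.1])
        (by linarith [hx₂.1, hx.2])
      exact mul_le_mul (Real.rpow_le_rpow hτ0 h3 hp.le)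
        (Real.rpow_le_rpow (by linarith) (hx.1.trans (le_abs_self _)) hl.le) (by positivity)
        (Real.rpow_nonneg (Gfun_nonneg ha r x) p)
  have htri : ∫ x, Gfun a r x ^ p * |x| ^ l
      ≤ 2 ^ p * ((∫ x, |bump ε R x - Gfun a r x| ^ p * |x| ^ l)
        + ∫ x, |bump ε R x| ^ p * |x| ^ l) := by
    rw [← integral_add hT hi, ← integral_const_mul]
    refine integral_mono hGi ((hT.add hi).const_mul _) fun x => ?_
    have g := Gfun_nonneg ha r x
    have h1 : Gfun a r x ≤ |bump ε R x - Gfun a r x| + |bump ε R x| := by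
      have := neg_le_abs (bump ε R x - Gfun a r x)
      have := le_abs_self (bump ε R x)
      linarith
    have h2 := (Real.rpow_le_rpow g h1 hp.le).trans
      (add_rpow_le_two hp.le (abs_nonneg _) (abs_nonneg _))
    refine (mul_le_mul_of_nonneg_right h2 (by positivity)).trans_eq ?_
    ring
  have hqe : τ ^ p * (R / 2) ^ l * (R - R / 2) = 2 ^ p * (q * R * (ε ^ p * R ^ l)) := by
    rw [hτp, hq, show R / 2 = R * (1 / 2) by ring, Real.mul_rpow (by linarith) (by norm_num)]
    field_simp
    ring
  rw [hqe] at hG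
  have hfin := le_of_mul_le_mul_left (hG.trans htri) (by positivity)
  have hqR : K + 1 ≤ q * R := by
    rw [div_le_iff₀ hq0] at hR0; linarith
  have := mul_le_mul_of_nonneg_right hqR hX
  have hm := mul_le_mul_of_nonneg_right (min_le_left 1 ((gOne / 4) ^ p)) hX
  linarith

/-! ### The sequence -/

/-- The weight `1 / (k + 1)` of the side bumps of the `k`-th competitor. -/
def epsSeq (k : ℕ) : ℝ := 1 / ((k : ℝ) + 1)

/-- The distance of the side bumps of the `k`-th competitor from the origin, chosen so that
`(epsSeq k) ^ p * (radSeq p l k) ^ l = k + 1`. -/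
def radSeq (p l : ℝ) (k : ℕ) : ℝ := ((k : ℝ) + 1) ^ ((p + 1) / l)

lemma epsSeq_nonneg (k : ℕ) : 0 ≤ epsSeq k := by unfold epsSeq; positivity

lemma epsSeq_le_one (k : ℕ) : epsSeq k ≤ 1 := by
  unfold epsSeq
  rw [div_le_one (by positivity)]
  linarith [(Nat.cast_nonneg k : (0 : ℝ) ≤ k)]

lemma tendsto_epsSeq : Tendsto epsSeq atTop (𝓝 0) := tendsto_one_div_add_atTop_nhds_zero_nat

lemma tendsto_cast_add_one : Tendsto (fun k : ℕ => (k : ℝ) + 1) atTop atTop :=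
  tendsto_atTop_add_const_right _ _ tendsto_natCast_atTop_atTop

lemma tendsto_radSeq {p l : ℝ} (hp : 0 < p) (hl : 0 < l) : Tendsto (radSeq p l) atTop atTop :=
  (tendsto_rpow_atTop (by positivity)).comp tendsto_cast_add_one

lemma one_le_radSeq {p l : ℝ} (hp : 0 < p) (hl : 0 < l) (k : ℕ) : 1 ≤ radSeq p l k :=
  Real.one_le_rpow (by linarith [(Nat.cast_nonneg k : (0 : ℝ) ≤ k)]) (by positivity)

lemma epsSeq_mul_radSeq {p l : ℝ} (hl : 0 < l) (k : ℕ) :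
    epsSeq k ^ p * radSeq p l k ^ l = (k : ℝ) + 1 := by
  have h : (0 : ℝ) < (k : ℝ) + 1 := by positivity
  unfold epsSeq radSeq
  rw [← Real.rpow_mul h.le, div_mul_cancel₀ _ hl.ne', Real.div_rpow (by norm_num) h.le,
    Real.one_rpow, Real.rpow_add h, Real.rpow_one]
  field_simp

/-- Instability of the Beckner–Hirschman inequality in the normalized
`L^p(dη_λ)` distance for `λ > 0` and `p ≥ 2(λ+1)`. -/
theorem bhi_instability_power_weight (l : ℝ) (hl : 0 < l) (p : ℝ) (hp : 2 * (l + 1) ≤ p) :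
    ∃ (C : ℝ) (h : ℕ → ℝ → ℝ),
      0 < C ∧
      (∀ k x, 0 ≤ h k x) ∧
      (∀ k, LpNormR 2 volume (h k) = 1) ∧
      (∀ k, Integrable (fun x => |h k x| ^ p) (etaMeasure l)) ∧
      Tendsto (fun k => BHdeficit (h k)) atTop (𝓝 0) ∧
      Tendsto (fun k => LpNormR p (etaMeasure l) (h k)) atTop atTop ∧
      C ≤ Filter.liminf
          (fun k => distToG p (etaMeasure l) (h k) / LpNormR p (etaMeasure l) (h k))
          atTop := by
  have hp0 : 0 < p := by linarith
  obtain ⟨K, hK0, hK⟩ := bump_weighted_upper hp0 hl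
  obtain ⟨C₀, R₀, hC₀, hdist⟩ := dist_lower hp0 hl
  have hε := epsSeq_nonneg
  have hε1 := epsSeq_le_one
  have hR := one_le_radSeq hp0 hl
  have hX := epsSeq_mul_radSeq (p := p) hl
  set h : ℕ → ℝ → ℝ := fun k => bump (epsSeq k) (radSeq p l k) with hh
  have hN : ∀ f : ℝ → ℝ, LpNormR p (etaMeasure l) f = (∫ x, |f x| ^ p * |x| ^ l) ^ (1 / p) := by
    intro f
    unfold LpNormR
    rw [integral_eta]
  have hnn : ∀ f : ℝ → ℝ, 0 ≤ ∫ x, |f x| ^ p * |x| ^ l := fun f =>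
    integral_nonneg fun x => by positivity
  have hhalf : ∀ᶠ k in atTop, 1 / 2 ≤ normConst (epsSeq k) (radSeq p l k) := by
    have h1 : Tendsto (fun k => 16 * gMass * epsSeq k) atTop (𝓝 0) := by
      simpa using tendsto_epsSeq.const_mul (16 * gMass)
    filter_upwards [h1.eventually (gt_mem_nhds (by norm_num : (0 : ℝ) < 1 / 2))] with k hk
    linarith [one_sub_normConst_le (hε k) (hε1 k) (radSeq p l k)]
  have hlow : ∀ᶠ k : ℕ in atTop, ((gOne / 2) ^ p * ((k : ℝ) + 1)) ^ (1 / p)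
      ≤ LpNormR p (etaMeasure l) (h k) := by
    filter_upwards [hhalf] with k hk
    have h1 := bump_weighted_lower hp0 hl (hε k) (hε1 k) (hR k) hk
    rw [hX] at h1
    rw [hN]
    have := gOne_pos
    exact Real.rpow_le_rpow (by positivity) h1 (by positivity)
  have hpos : ∀ᶠ k : ℕ in atTop, 0 < LpNormR p (etaMeasure l) (h k) := by
    filter_upwards [hlow] with k hk
    have := gOne_pos
    exact lt_of_lt_of_le (by positivity) hk
  have hbdd : ∀ k, BddBelow {d : ℝ | ∃ a r : ℝ, 0 < a ∧
      d = LpNormR p (etaMeasure l) (fun x => h k x - Gfun a r x)} := by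
    intro k
    refine ⟨0, ?_⟩
    rintro d ⟨a, r, -, rfl⟩
    rw [hN]
    exact Real.rpow_nonneg (hnn _) _
  refine ⟨(C₀ / K) ^ (1 / p), h, by positivity, fun k => bump_nonneg (hε k) (hε1 k) _,
    fun k => LpNormR_two_bump (hε k) (hε1 k) _, fun k => ?_, ?_, ?_, ?_⟩
  · rw [integrable_eta_iff]
    exact (hK _ _ (hε k) (hε1 k) (hR k)).1
  · refine squeeze_zero_norm (fun k => abs_deficit_bump_le (hε k) (hε1 k) _) ?_
    simpa using tendsto_epsSeq.const_mul
      (2 * lipConst (2 * (3 + 16 * gMass) + 6) * l1Const)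
  · refine tendsto_atTop_mono' _ hlow ?_
    have := gOne_pos
    exact (tendsto_rpow_atTop (by positivity)).comp
      (tendsto_cast_add_one.const_mul_atTop (by positivity))
  · refine le_liminf_of_le ?_ ?_
    · -- The ratio is at most `1`, since `0 ≤ G_{π,0} ≤ 2 h_k` as soon as the normalizing constant
      -- is at least `1/2`; this makes the real-valued `liminf` meaningful.
      refine IsBoundedUnder.isCoboundedUnder_ge ⟨1, ?_⟩
      rw [eventually_map]
      filter_upwards [hhalf, hpos] with k hk hkpos
      rw [div_le_one hkpos]
      refine (csInf_le (hbdd k) ⟨π, 0, Real.pi_pos, rfl⟩).trans ?_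
      rw [hN, hN]
      refine Real.rpow_le_rpow (hnn _) ?_ (by positivity)
      refine integral_mono (integrable_sub_weighted hp0 hl (hε k) (hε1 k) (hR k) Real.pi_pos 0)
        (hK _ _ (hε k) (hε1 k) (hR k)).1 fun x => ?_
      refine mul_le_mul_of_nonneg_right (Real.rpow_le_rpow (abs_nonneg _) ?_ hp0.le) (by positivity)
      have g0 := Gfun_nonneg Real.pi_pos 0 x
      have g1 := Gfun_le_rawFun (hε k) (radSeq p l k) x
      have g2 : Gfun π 0 x ≤ 2 * h k x := by
        simp only [hh, bump]
        nlinarith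
      have g3 : 0 ≤ h k x := bump_nonneg (hε k) (hε1 k) _ x
      rw [abs_of_nonneg g3, abs_le]
      constructor <;> linarith
    · filter_upwards [hhalf, hpos, (tendsto_radSeq hp0 hl).eventually_ge_atTop R₀] with k hk hkpos hkR
      rw [le_div_iff₀ hkpos]
      refine le_csInf ⟨_, π, 0, Real.pi_pos, rfl⟩ ?_
      rintro d ⟨a, r, ha, rfl⟩
      have hX1 : 1 ≤ epsSeq k ^ p * radSeq p l k ^ l := by
        rw [hX]; linarith [(Nat.cast_nonneg k : (0 : ℝ) ≤ k)]
      have h1 := (hK _ _ (hε k) (hε1 k) (hR k)).2 hX1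
      have h2 := hdist _ _ (hε k) (hε1 k) (hR k) hkR hX1 hk a r ha
      rw [hN, hN, ← Real.mul_rpow (by positivity) (hnn _)]
      refine Real.rpow_le_rpow (mul_nonneg (by positivity) (hnn _)) ?_ (by positivity)
      calc C₀ / K * ∫ x, |h k x| ^ p * |x| ^ l
          ≤ C₀ / K * (K * (epsSeq k ^ p * radSeq p l k ^ l)) :=
            mul_le_mul_of_nonneg_left h1 (by positivity)
        _ = C₀ * (epsSeq k ^ p * radSeq p l k ^ l) := by field_simp
        _ ≤ _ := h2
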